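/- With weights w_n = ((n−1)!)^α, 0 < α < 1, and 1 ≤ i < 1/α, the number X_{i+1,N} of vertices of degree i+1 in T_N satisfies X_{i+1,N}/n_i → 1 in probability as N → ∞, where n_i = (i!)^α N^{1−iα}. -/

import Mathlib

open Filter

/-- Rooted planar trees (the tree hanging from the vertex `s` next to the root `r`;
the full tree of the paper with `N` edges corresponds to a `PTree` with `N` vertices,
plus the extra root `r` of degree 1 attached to the root `s` of the `PTree`). -/
inductive PTree : Type where
  | node : List PTree → PTree

namespace PTree

/-- The (ordered) subtrees attached to the root. -/
def children : PTree → List PTree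
  | node ts => ts

/-- Number of vertices of the `PTree`, i.e. the number `N` of edges of the paper's tree. -/
def size : PTree → ℕ
  | node ts => 1 + (ts.attach.map (fun t => size t.1)).sum
decreasing_by simp [PTree.node.sizeOf_spec]; have := List.sizeOf_lt_of_mem t.2; omega

/-- The weight `∏_{v ≠ r} w_{σ(v)}`: every vertex `v ≠ r` has degree `outdeg(v) + 1`. -/
noncomputable def weight (w : ℕ → ℝ) : PTree → ℝ
  | node ts => w (ts.length + 1) * (ts.attach.map (fun t => weight w t.1)).prod
decreasing_by simp [PTree.node.sizeOf_spec]; have := List.sizeOf_lt_of_mem t.2; omega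

/-- The number of vertices of outdegree `k`, i.e. the number `X_{k+1}` of vertices
(other than `r`) of degree `k+1`. -/
def countOutdeg (k : ℕ) : PTree → ℕ
  | node ts => (if ts.length = k then 1 else 0) + (ts.attach.map (fun t => countOutdeg k t.1)).sum
decreasing_by simp [PTree.node.sizeOf_spec]; have := List.sizeOf_lt_of_mem t.2; omega

/-- The maximal outdegree of a vertex of the tree. -/
def maxOutdeg : PTree → ℕ
  | node ts => max ts.length ((ts.attach.map (fun t => maxOutdeg t.1)).foldr max 0)
decreasing_by simp [PTree.node.sizeOf_spec]; have := List.sizeOf_lt_of_mem t.2; omega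

/-- Outdegree of the first (leftmost) child `s₁` of `s` (0 if there is none). -/
def firstChildOutdeg : PTree → ℕ
  | node [] => 0
  | node (t :: _) => t.children.length

end PTree

/-- The partition function `Z_N = Σ_{τ ∈ Γ_N} ∏_{v ∈ V(τ)∖{r}} w_{σ(v)}`. -/
noncomputable def Zfun (w : ℕ → ℝ) (N : ℕ) : ℝ :=
  ∑' t : {t : PTree // t.size = N}, t.1.weight w

/-- `ν_N(P)`: probability of the event `P` under the simply generated measure `ν_N`. -/
noncomputable def nu (w : ℕ → ℝ) (N : ℕ) (P : PTree → Prop) : ℝ :=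
  (∑' t : {t : PTree // t.size = N ∧ P t}, t.1.weight w) / Zfun w N

/-!
The cycle lemma expresses the factorial moments of the number of vertices of degree `i + 1` through
the coefficients `Z(n, m)` of `x ^ m` in `F ^ n`, where `F = ∑ (k!) ^ α x ^ k`: these are the
partition functions of `m` balls in `n` boxes. When `n` is of the order of `m`, a box distribution
condenses: capping all boxes at `(1 - δ) m` balls makes `Z(n, m)` smaller than `(m!) ^ α` by an
exponential factor, so one box holds almost all the balls. Adding a ball therefore multiplies the
partition function by about `m ^ α`, and adding a box multiplies it by about `1`. Hence the `j`-th
factorial moment is asymptotic to `n_i ^ j`, and the second moment method concludes.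
-/

section CoeffwiseBounds

open PowerSeries

variable {R : Type*}

section CommSemiring

variable [CommSemiring R]

theorem coeff_X_mul_derivative (f : R⟦X⟧) (k : ℕ) :
    coeff k (X * d⁄dX R f) = k * coeff k f := by
  cases k with
  | zero => simp
  | succ k => rw [coeff_succ_X_mul, coeff_derivative, Nat.cast_succ, mul_comm]

theorem succ_mul_coeff_derivative_mul_pow (f : R⟦X⟧) (n m : ℕ) :
    (n + 1) * coeff m (d⁄dX R f * f ^ n) = (m + 1) * coeff (m + 1) (f ^ (n + 1)) := by
  have h : d⁄dX R (f ^ (n + 1)) = (n + 1) • (d⁄dX R f * f ^ n) := by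
    rw [derivative_pow, nsmul_eq_mul, Nat.add_sub_cancel]; ring
  rw [mul_comm ((m : R) + 1), ← coeff_derivative, h, map_nsmul, nsmul_eq_mul, Nat.cast_succ]

theorem succ_mul_coeff_X_mul_derivative_mul_pow (f : R⟦X⟧) (n m : ℕ) :
    (n + 1) * coeff m (X * d⁄dX R f * f ^ n) = m * coeff m (f ^ (n + 1)) := by
  cases m with
  | zero => simp [mul_assoc]
  | succ m =>
    rw [mul_assoc, coeff_succ_X_mul, succ_mul_coeff_derivative_mul_pow, Nat.cast_succ]

end CommSemiring

theorem coeff_sub_trunc [CommRing R] (f : R⟦X⟧) (L k : ℕ) :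
    coeff k (f - (trunc L f : R⟦X⟧)) = if k < L then 0 else coeff k f := by
  rw [map_sub, Polynomial.coeff_coe, coeff_trunc]
  split_ifs <;> simp

/-- The power series all of whose coefficients are nonnegative, as a subsemiring: products and
powers of such series are again of this kind. -/
def nonnegCoeffs (R : Type*) [CommSemiring R] [PartialOrder R] [IsOrderedRing R] :
    Subsemiring R⟦X⟧ where
  carrier := {f | ∀ k, 0 ≤ coeff k f}
  zero_mem' k := by simp
  one_mem' k := by rw [coeff_one]; split_ifs <;> simp
  add_mem' hf hg k := by rw [map_add]; exact add_nonneg (hf k) (hg k)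
  mul_mem' hf hg k := by
    rw [coeff_mul]; exact Finset.sum_nonneg fun p _ => mul_nonneg (hf p.1) (hg p.2)

variable [CommRing R] [PartialOrder R] [IsOrderedRing R] {f g h p : R⟦X⟧} {m : ℕ}

theorem coeff_mul_le_coeff_mul (hfg : ∀ k ≤ m, coeff k f ≤ coeff k g) (hh : h ∈ nonnegCoeffs R) :
    coeff m (f * h) ≤ coeff m (g * h) := by
  rw [coeff_mul, coeff_mul]
  refine Finset.sum_le_sum fun p hp => mul_le_mul_of_nonneg_right (hfg _ ?_) (hh _)
  exact (Finset.HasAntidiagonal.mem_antidiagonal.1 hp).le.trans' (Nat.le_add_right ..)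

theorem trunc_mem_nonnegCoeffs (hf : f ∈ nonnegCoeffs R) (L : ℕ) :
    (trunc L f : R⟦X⟧) ∈ nonnegCoeffs R := fun k => by
  rw [Polynomial.coeff_coe, coeff_trunc]
  split_ifs
  exacts [hf k, le_rfl]

theorem sub_trunc_mem_nonnegCoeffs (hf : f ∈ nonnegCoeffs R) (L : ℕ) :
    f - (trunc L f : R⟦X⟧) ∈ nonnegCoeffs R := fun k => by
  rw [coeff_sub_trunc]
  split_ifs
  exacts [le_rfl, hf k]

theorem succ_mul_sub_mul_pow_sub_mem_nonnegCoeffs (hg : g ∈ nonnegCoeffs R)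
    (hfg : f - g ∈ nonnegCoeffs R) (n : ℕ) :
    (n + 1) * ((f - g) * f ^ n) - (f ^ (n + 1) - g ^ (n + 1)) ∈ nonnegCoeffs R := by
  have hf : f ∈ nonnegCoeffs R := by simpa using add_mem hfg hg
  induction n with
  | zero => simp
  | succ n ih =>
    have split_step : ((n + 1 : ℕ) + 1) * ((f - g) * f ^ (n + 1)) - (f ^ (n + 2) - g ^ (n + 2)) =
        g * ((n + 1) * ((f - g) * f ^ n) - (f ^ (n + 1) - g ^ (n + 1))) +
          (n + 1 : ℕ) * ((f - g) * ((f - g) * f ^ n)) := by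
      push_cast; ring
    rw [split_step]
    exact add_mem (mul_mem hg ih)
      (mul_mem (natCast_mem _ _) (mul_mem hfg (mul_mem hfg (pow_mem hf n))))

-- Union bound: some factor of `f ^ (n + 1)` must use a term of `f - g`.
theorem coeff_pow_sub_coeff_pow_le (hg : g ∈ nonnegCoeffs R) (hfg : f - g ∈ nonnegCoeffs R)
    (n m : ℕ) :
    coeff m (f ^ (n + 1)) - coeff m (g ^ (n + 1)) ≤ (n + 1) * coeff m ((f - g) * f ^ n) := by
  have h := succ_mul_sub_mul_pow_sub_mem_nonnegCoeffs hg hfg n m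
  rw [← Nat.cast_succ, ← nsmul_eq_mul, map_sub, map_sub, map_nsmul, nsmul_eq_mul, sub_nonneg] at h
  rwa [← Nat.cast_succ]

theorem mul_coeff_pow_sub_coeff_trunc_pow_le (hf : f ∈ nonnegCoeffs R) {c : R} (hc : 0 ≤ c)
    {L : ℕ} (n : ℕ) (hp : ∀ k ≤ m, c * coeff k (f - (trunc L f : R⟦X⟧)) ≤ coeff k p) :
    c * (coeff m (f ^ (n + 1)) - coeff m ((trunc L f : R⟦X⟧) ^ (n + 1))) ≤
      (n + 1) * coeff m (p * f ^ n) := by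
  have union_bound := coeff_pow_sub_coeff_pow_le (trunc_mem_nonnegCoeffs hf L)
    (sub_trunc_mem_nonnegCoeffs hf L) n m
  have compare : coeff m (C c * (f - (trunc L f : R⟦X⟧)) * f ^ n) ≤ coeff m (p * f ^ n) :=
    coeff_mul_le_coeff_mul (fun k hk => by rw [coeff_C_mul]; exact hp k hk) (pow_mem hf n)
  rw [mul_assoc, coeff_C_mul] at compare
  calc _ ≤ c * ((n + 1) * coeff m ((f - (trunc L f : R⟦X⟧)) * f ^ n)) :=
        mul_le_mul_of_nonneg_left union_bound hc
    _ = (n + 1) * (c * coeff m ((f - (trunc L f : R⟦X⟧)) * f ^ n)) := mul_left_comm ..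
    _ ≤ _ := mul_le_mul_of_nonneg_left compare (add_nonneg (Nat.cast_nonneg n) zero_le_one)

theorem succ_mul_coeff_succ_pow_le (hf : f ∈ nonnegCoeffs R) {a c : R} (n : ℕ)
    (h : ∀ k ≤ m, (k + 1) * coeff (k + 1) f ≤ (a + k * c) * coeff k f) :
    (m + 1) * coeff (m + 1) (f ^ (n + 1)) ≤ ((n + 1) * a + m * c) * coeff m (f ^ (n + 1)) := by
  have compare : coeff m (d⁄dX R f * f ^ n) ≤
      coeff m ((C a * f + C c * (X * d⁄dX R f)) * f ^ n) :=
    coeff_mul_le_coeff_mul (fun k hk => by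
      rw [coeff_derivative, map_add, coeff_C_mul, coeff_C_mul, coeff_X_mul_derivative, mul_comm]
      exact (h k hk).trans_eq (by ring)) (pow_mem hf n)
  rw [add_mul, mul_assoc, mul_assoc (C c), map_add, coeff_C_mul, coeff_C_mul,
    ← pow_succ'] at compare
  rw [← succ_mul_coeff_derivative_mul_pow]
  calc _ ≤ (n + 1) * (a * coeff m (f ^ (n + 1)) + c * coeff m (X * d⁄dX R f * f ^ n)) :=
        mul_le_mul_of_nonneg_left compare (add_nonneg (Nat.cast_nonneg n) zero_le_one)
    _ = (n + 1) * a * coeff m (f ^ (n + 1)) +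
          c * ((n + 1) * coeff m (X * d⁄dX R f * f ^ n)) := by ring
    _ = _ := by rw [succ_mul_coeff_X_mul_derivative_mul_pow]; ring

theorem mul_coeff_pow_sub_le_succ_mul_coeff_succ_pow (hf : f ∈ nonnegCoeffs R) {c : R} (hc : 0 ≤ c)
    {L : ℕ} (n : ℕ) (h : ∀ k ≥ L, c * coeff k f ≤ (k + 1) * coeff (k + 1) f) :
    c * (coeff m (f ^ (n + 1)) - coeff m ((trunc L f : R⟦X⟧) ^ (n + 1))) ≤
      (m + 1) * coeff (m + 1) (f ^ (n + 1)) := by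
  rw [← succ_mul_coeff_derivative_mul_pow]
  refine mul_coeff_pow_sub_coeff_trunc_pow_le hf hc n fun k _ => ?_
  rw [coeff_sub_trunc, coeff_derivative, mul_comm (coeff (k + 1) f)]
  split_ifs with hk
  · rw [mul_zero]; exact mul_nonneg (add_nonneg (Nat.cast_nonneg k) zero_le_one) (hf _)
  · exact h k (not_lt.1 hk)

/- Among `n + 1` factors of total degree `m`, one of degree exceeding `L` leaves at most `m - L`
factors of positive degree. -/
theorem succ_mul_sub_add_mul_sub_le_mul_coeff_pow (hf : f ∈ nonnegCoeffs R) (L n m : ℕ) :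
    (n + 1) * (coeff m (f ^ (n + 1)) - coeff 0 f * coeff m (f ^ n)) +
        L * (coeff m (f ^ (n + 1)) - coeff m ((trunc (L + 1) f : R⟦X⟧) ^ (n + 1))) ≤
      m * coeff m (f ^ (n + 1)) := by
  have excess := mul_coeff_pow_sub_coeff_trunc_pow_le (m := m) (L := L + 1)
    (p := X * d⁄dX R f - (f - C (coeff 0 f))) hf (Nat.cast_nonneg L) n ?_
  · rw [sub_mul, sub_mul, map_sub, map_sub, coeff_C_mul, ← pow_succ', mul_sub (_ + _),
      succ_mul_coeff_X_mul_derivative_mul_pow, le_sub_iff_add_le'] at excess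
    exact excess
  · rintro (- | k) -
    · simp [coeff_trunc]
    rw [coeff_sub_trunc, map_sub, map_sub, coeff_X_mul_derivative, coeff_C,
      if_neg k.succ_ne_zero, sub_zero, Nat.cast_succ, add_one_mul (k : R), add_sub_cancel_right]
    split_ifs with hkL
    · rw [mul_zero]; exact mul_nonneg (Nat.cast_nonneg k) (hf _)
    · exact mul_le_mul_of_nonneg_right (Nat.mono_cast (by omega)) (hf _)

end CoeffwiseBounds

namespace PTree

open PowerSeries Finset.HasAntidiagonal

theorem size_node (ts : List PTree) : (node ts).size = 1 + (ts.map size).sum := by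
  rw [size, List.attach_map_val (f := size)]

theorem weight_node (w : ℕ → ℝ) (ts : List PTree) :
    (node ts).weight w = w (ts.length + 1) * (ts.map (weight w)).prod := by
  rw [weight, List.attach_map_val (f := weight w)]

theorem countOutdeg_node (k : ℕ) (ts : List PTree) :
    (node ts).countOutdeg k =
      (if ts.length = k then 1 else 0) + (ts.map (countOutdeg k)).sum := by
  rw [countOutdeg, List.attach_map_val (f := countOutdeg k)]

theorem size_pos : ∀ t : PTree, 0 < t.size
  | node ts => by rw [size_node]; omega

theorem length_le_sum_size (l : List PTree) : l.length ≤ (l.map size).sum := by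
  simpa using List.length_le_sum_of_one_le (l.map size) (by simp [Nat.succ_le_iff, size_pos])

theorem weight_nonneg {w : ℕ → ℝ} (hw : ∀ k, 0 ≤ w k) : ∀ t : PTree, 0 ≤ t.weight w
  | node ts => by
    rw [weight_node]
    refine mul_nonneg (hw _) (List.prod_nonneg fun a ha => ?_)
    obtain ⟨t, -, rfl⟩ := List.mem_map.1 ha
    exact weight_nonneg hw t

theorem weight_update (w : ℕ → ℝ) (i : ℕ) (u : ℝ) : ∀ t : PTree,
    t.weight (Function.update w (i + 1) (u * w (i + 1))) = u ^ t.countOutdeg i * t.weight w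
  | node ts => by
    have subtrees (l : List PTree) (hl : l ⊆ ts) :
        (l.map (weight (Function.update w (i + 1) (u * w (i + 1))))).prod =
          u ^ (l.map (countOutdeg i)).sum * (l.map (weight w)).prod := by
      induction l with
      | nil => simp
      | cons t l ih =>
        obtain ⟨_, hl⟩ := List.cons_subset.1 hl
        simp only [List.map_cons, List.prod_cons, List.sum_cons, pow_add, ih hl,
          weight_update w i u t]
        ring
    rw [weight_node, weight_node, countOutdeg_node, subtrees ts (List.Subset.refl _), pow_add]
    rcases eq_or_ne ts.length i with rfl | hi
    · rw [Function.update_self, if_pos rfl, pow_one]; ring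
    · rw [Function.update_of_ne (by simpa using hi), if_neg hi, pow_zero, one_mul]; ring

-- The children of the first root, together with the other trees, form a smaller forest.
theorem finite_forests (N k : ℕ) :
    {l : List PTree | l.length = k ∧ (l.map size).sum = N}.Finite := by
  induction N generalizing k with
  | zero =>
    refine (Set.finite_singleton []).subset fun l hl => ?_
    exact List.length_eq_zero_iff.1 (Nat.le_zero.1 (hl.2 ▸ length_le_sum_size l))
  | succ N ih =>
    refine ((Finset.range (N + 1)).finite_toSet.biUnion fun d _ =>
      (ih (k - 1 + d)).image fun l => node (l.take d) :: l.drop d).subset ?_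
    rintro (- | ⟨⟨ts⟩, l⟩) ⟨hlen, hsum⟩
    · simp at hsum
    rw [List.map_cons, List.sum_cons, size_node] at hsum
    rw [List.length_cons] at hlen
    have hts := length_le_sum_size ts
    exact Set.mem_biUnion (x := ts.length) (by simp; omega)
      ⟨ts ++ l, ⟨by rw [List.length_append]; omega,
        by rw [List.map_append, List.sum_append]; omega⟩, by simp⟩

/-- The planar forests of `k` trees with `N` vertices in total. -/
noncomputable def forests (N k : ℕ) : Finset (List PTree) := (finite_forests N k).toFinset

theorem mem_forests {N k : ℕ} {l : List PTree} :
    l ∈ forests N k ↔ l.length = k ∧ (l.map size).sum = N :=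
  Set.Finite.mem_toFinset _

/-- The partition function of the forests of `k` trees with `N` vertices in total. -/
noncomputable def forestWeight (w : ℕ → ℝ) (N k : ℕ) : ℝ :=
  ∑ l ∈ forests N k, (l.map (weight w)).prod

theorem forestWeight_zero_zero (w : ℕ → ℝ) : forestWeight w 0 0 = 1 := by
  have : forests 0 0 = {[]} := by ext l; simp +contextual [mem_forests, List.length_eq_zero_iff]
  rw [forestWeight, this, Finset.sum_singleton, List.map_nil, List.prod_nil]

theorem forestWeight_succ_succ (w : ℕ → ℝ) (k m : ℕ) :
    forestWeight w (k + m + 1) (k + 1) =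
      ∑ p ∈ antidiagonal m, w (p.1 + 1) * forestWeight w (k + m) (k + p.1) := by
  simp only [forestWeight, Finset.mul_sum]
  rw [Finset.sum_sigma', eq_comm]
  refine Finset.sum_nbij (fun x => node (x.2.take x.1.1) :: x.2.drop x.1.1) ?_ ?_ ?_ ?_
  · rintro ⟨⟨d, e⟩, l⟩ h
    simp only [Finset.mem_sigma, mem_forests, mem_antidiagonal] at h
    rw [mem_forests, List.length_cons, List.length_drop, List.map_cons, List.sum_cons, size_node,
      add_assoc, ← List.sum_append, ← List.map_append, List.take_append_drop]
    dsimp only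
    omega
  · rintro ⟨⟨d, e⟩, l⟩ h ⟨⟨d', e'⟩, l'⟩ h' heq
    simp only [Finset.coe_sigma, Set.mem_sigma_iff, Finset.mem_coe, mem_forests,
      mem_antidiagonal] at h h'
    obtain ⟨htake, hdrop⟩ : l.take d = l'.take d' ∧ l.drop d = l'.drop d' := by simpa using heq
    obtain rfl : l = l' := by
      rw [← List.take_append_drop d l, ← List.take_append_drop d' l', htake, hdrop]
    obtain rfl : d = d' := by omega
    obtain rfl : e = e' := by omega
    rfl
  · rintro (- | ⟨⟨ts⟩, l⟩) h
    · simp [mem_forests] at h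
    rw [Finset.mem_coe, mem_forests, List.length_cons, List.map_cons, List.sum_cons,
      size_node] at h
    have hts := length_le_sum_size ts
    have hl := length_le_sum_size l
    refine ⟨⟨(ts.length, m - ts.length), ts ++ l⟩, ?_, by simp⟩
    simp only [Finset.coe_sigma, Set.mem_sigma_iff, Finset.mem_coe, mem_forests,
      mem_antidiagonal, List.length_append, List.map_append, List.sum_append]
    omega
  · rintro ⟨⟨d, e⟩, l⟩ h
    simp only [Finset.mem_sigma, mem_forests] at h
    have hd : (l.take d).length = d := by rw [List.length_take]; omega
    rw [List.map_cons, List.prod_cons, weight_node, hd, mul_assoc, ← List.prod_append,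
      ← List.map_append, List.take_append_drop]

/-- The generating series of the vertex weights, indexed by the outdegree. -/
noncomputable def offspringSeries (w : ℕ → ℝ) : ℝ⟦X⟧ := PowerSeries.mk fun k => w (k + 1)

-- The cycle lemma; the induction removes the root of the first tree.
theorem add_mul_forestWeight (w : ℕ → ℝ) (k m : ℕ) :
    (k + m) * forestWeight w (k + m) k = k * coeff m (offspringSeries w ^ (k + m)) := by
  obtain ⟨N, hN⟩ : ∃ N, k + m = N := ⟨_, rfl⟩
  induction N generalizing k m with
  | zero => simp [show k = 0 by omega, show m = 0 by omega]
  | succ N ih =>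
    rcases k with - | k
    · have no_trees : forestWeight w (0 + m) 0 = 0 := Finset.sum_eq_zero fun l hl => by
        obtain ⟨hlen, hsum⟩ := mem_forests.1 hl
        rw [List.length_eq_zero_iff.1 hlen] at hsum
        simp at hsum
        omega
      rw [no_trees]; simp
    rw [show k + 1 + m = k + m + 1 by omega, forestWeight_succ_succ]
    rcases Nat.eq_zero_or_pos (k + m) with hkm | hkm
    · obtain ⟨rfl, rfl⟩ : k = 0 ∧ m = 0 := by omega
      simp [forestWeight_zero_zero, offspringSeries]
    set f := offspringSeries w
    have scaled : (k + m) * ∑ p ∈ antidiagonal m, w (p.1 + 1) * forestWeight w (k + m) (k + p.1) =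
        k * coeff m (f ^ (k + m + 1)) + coeff m (X * d⁄dX ℝ f * f ^ (k + m)) := by
      rw [pow_succ', coeff_mul, coeff_mul, Finset.mul_sum, Finset.mul_sum,
        ← Finset.sum_add_distrib]
      refine Finset.sum_congr rfl fun p hp => ?_
      obtain rfl : p.1 + p.2 = m := mem_antidiagonal.1 hp
      have smaller := ih (k + p.1) p.2 (by omega)
      rw [add_assoc k] at smaller
      rw [coeff_X_mul_derivative, show coeff p.1 f = w (p.1 + 1) from coeff_mk ..]
      push_cast at smaller ⊢
      linear_combination w (p.1 + 1) * smaller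
    have differentiated := succ_mul_coeff_X_mul_derivative_mul_pow f (k + m) m
    have hkm' : (k + m : ℝ) ≠ 0 := by exact_mod_cast hkm.ne'
    apply mul_left_cancel₀ hkm'
    push_cast at differentiated ⊢
    linear_combination (k + m + 1 : ℝ) * scaled + differentiated

/-- The trees with `N` vertices, as a `Finset`. -/
noncomputable def trees (N : ℕ) : Finset PTree :=
  (forests N 1).preimage (fun t => [t]) List.singleton_injective.injOn

theorem mem_trees {N : ℕ} {t : PTree} : t ∈ trees N ↔ t.size = N := by
  simp [trees, mem_forests]

theorem sum_weight_trees (w : ℕ → ℝ) (N : ℕ) :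
    ∑ t ∈ trees N, t.weight w = forestWeight w N 1 := by
  refine Finset.sum_nbij (fun t => [t]) (fun t ht => ?_) List.singleton_injective.injOn
    (fun l hl => ?_) (fun t _ => by simp)
  · simpa [mem_forests] using mem_trees.1 ht
  · obtain ⟨hlen, hsum⟩ := mem_forests.1 hl
    obtain ⟨t, rfl⟩ := List.length_eq_one_iff.1 hlen
    exact ⟨t, mem_trees.2 (by simpa using hsum), rfl⟩

theorem tsum_weight (w : ℕ → ℝ) (N : ℕ) (P : PTree → Prop) [DecidablePred P] :
    ∑' t : {t : PTree // t.size = N ∧ P t}, t.1.weight w = ∑ t ∈ trees N with P t, t.weight w := by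
  rw [← Finset.tsum_subtype]
  exact (Equiv.subtypeEquivRight fun t => by
    rw [Finset.mem_filter, mem_trees]).tsum_eq
      (fun t : {t // t ∈ (trees N).filter P} => t.1.weight w)

theorem Zfun_eq_sum (w : ℕ → ℝ) (N : ℕ) : Zfun w N = ∑ t ∈ trees N, t.weight w := by
  rw [Zfun, ← Finset.tsum_subtype]
  exact (Equiv.subtypeEquivRight fun t => mem_trees.symm).tsum_eq
    (fun t : {t // t ∈ trees N} => t.1.weight w)

theorem offspringSeries_update (w : ℕ → ℝ) (i : ℕ) (u : ℝ) :
    offspringSeries (Function.update w (i + 1) ((u + 1) * w (i + 1))) =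
      C (u * w (i + 1)) * X ^ i + offspringSeries w := by
  ext k
  rw [map_add, coeff_C_mul, coeff_X_pow, offspringSeries, offspringSeries, coeff_mk, coeff_mk]
  rcases eq_or_ne k i with rfl | hk
  · rw [Function.update_self, if_pos rfl]; ring
  · rw [Function.update_of_ne (by simpa using hk), if_neg hk]; ring

theorem succ_mul_sum_pow_countOutdeg (w : ℕ → ℝ) (i m : ℕ) (u : ℝ) :
    (m + 1) * ∑ t ∈ trees (m + 1), (u + 1) ^ t.countOutdeg i * t.weight w =
      ∑ j ∈ Finset.range (m + 2), u ^ j * (w (i + 1) ^ j * ((m + 1).choose j : ℝ) *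
        coeff m (X ^ (i * j) * offspringSeries w ^ (m + 1 - j))) := by
  have cycle := add_mul_forestWeight (Function.update w (i + 1) ((u + 1) * w (i + 1))) 1 m
  rw [add_comm 1 m, ← sum_weight_trees, offspringSeries_update, add_pow, map_sum] at cycle
  simp only [weight_update, Nat.cast_one, one_mul] at cycle
  rw [add_comm (m : ℝ), cycle]
  refine Finset.sum_congr rfl fun j _ => ?_
  rw [mul_pow, ← pow_mul, ← map_pow, mul_assoc, mul_assoc, coeff_C_mul, ← mul_assoc,
    ← nsmul_eq_mul', map_nsmul, nsmul_eq_mul]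
  ring

-- The binomial moments are the Taylor coefficients at `1` of the generating polynomial.
theorem succ_mul_sum_choose_countOutdeg (w : ℕ → ℝ) (i m j : ℕ) (hj : j ≤ m + 1) :
    (m + 1) * ∑ t ∈ trees (m + 1), ((t.countOutdeg i).choose j : ℝ) * t.weight w =
      w (i + 1) ^ j * ((m + 1).choose j : ℝ) *
        coeff m (X ^ (i * j) * offspringSeries w ^ (m + 1 - j)) := by
  have generating_polynomial :
      Polynomial.C (m + 1 : ℝ) * ∑ t ∈ trees (m + 1),
          (Polynomial.X + 1) ^ t.countOutdeg i * Polynomial.C (t.weight w) =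
        ∑ j ∈ Finset.range (m + 2), Polynomial.X ^ j *
          Polynomial.C (w (i + 1) ^ j * ((m + 1).choose j : ℝ) *
            coeff m (X ^ (i * j) * offspringSeries w ^ (m + 1 - j))) :=
    Polynomial.funext fun u => by
      simpa [Polynomial.eval_finsetSum] using succ_mul_sum_pow_countOutdeg w i m u
  have h := congrArg (Polynomial.coeff · j) generating_polynomial
  simpa only [Polynomial.coeff_C_mul, Polynomial.finsetSum_coeff, Polynomial.coeff_mul_C,
    Polynomial.coeff_X_add_one_pow, Polynomial.coeff_X_pow, ite_mul, one_mul, zero_mul,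
    Finset.sum_ite_eq, Finset.mem_range, if_pos (Nat.lt_succ_of_le hj)] using h

/-- The expectation of `X` under the simply generated measure `ν_N`, written as a finite sum; it is
`0` when `Zfun w N = 0`. -/
noncomputable def expect (w : ℕ → ℝ) (N : ℕ) (X : PTree → ℝ) : ℝ :=
  (∑ t ∈ trees N, X t * t.weight w) / Zfun w N

theorem nu_lt_abs_le {w : ℕ → ℝ} (hw : ∀ k, 0 ≤ w k) (N : ℕ) (X : PTree → ℝ) {ε : ℝ}
    (hε : 0 < ε) : nu w N (fun t => ε < |X t|) ≤ expect w N (fun t => X t ^ 2) / ε ^ 2 := by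
  classical
  have hZ : 0 ≤ Zfun w N := tsum_nonneg fun t => weight_nonneg hw t
  rw [nu, tsum_weight, expect, div_right_comm]
  refine div_le_div_of_nonneg_right ?_ hZ
  rw [Finset.sum_div, Finset.sum_filter]
  refine Finset.sum_le_sum fun t _ => ?_
  have ht := weight_nonneg hw t
  split_ifs with h
  · rw [le_div_iff₀ (by positivity), mul_comm, ← sq_abs (X t)]
    gcongr
  · positivity

theorem nu_nonneg {w : ℕ → ℝ} (hw : ∀ k, 0 ≤ w k) (N : ℕ) (P : PTree → Prop) : 0 ≤ nu w N P :=
  div_nonneg (tsum_nonneg fun t => weight_nonneg hw t) (tsum_nonneg fun t => weight_nonneg hw t)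

theorem expect_sq_natCast_div_sub_one {w : ℕ → ℝ} {N : ℕ} (hZ : Zfun w N ≠ 0) (X : PTree → ℕ)
    {a : ℝ} (ha : a ≠ 0) :
    expect w N (fun t => (X t / a - 1) ^ 2) =
      2 * (expect w N (fun t => ((X t).choose 2 : ℝ)) / a ^ 2) +
        expect w N (fun t => ((X t).choose 1 : ℝ)) / a * (a⁻¹ - 2) + 1 := by
  have pointwise (t : PTree) : ((X t : ℝ) / a - 1) ^ 2 * t.weight w =
      2 / a ^ 2 * (((X t).choose 2 : ℝ) * t.weight w) +
        (a⁻¹ - 2) / a * (((X t).choose 1 : ℝ) * t.weight w) + t.weight w := by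
    rw [Nat.cast_choose_two, Nat.choose_one_right]
    field_simp
    ring
  simp only [expect, pointwise, Finset.sum_add_distrib, ← Finset.mul_sum, ← Zfun_eq_sum]
  field_simp

end PTree

section Estimates

theorem natCast_rpow_add_mul_succ_rpow_le (m : ℕ) {p : ℝ} (hp0 : 0 < p) (hp1 : p ≤ 1) :
    (m : ℝ) ^ p + p * ((m : ℝ) + 1) ^ (p - 1) ≤ ((m : ℝ) + 1) ^ p := by
  have hm : (0 : ℝ) < m + 1 := by positivity
  have bernoulli := rpow_one_add_le_one_add_mul_self (s := -(1 / ((m : ℝ) + 1))) (p := p)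
    (by rw [neg_le_neg_iff, div_le_one hm]; simp) hp0.le hp1
  rw [show 1 + -(1 / ((m : ℝ) + 1)) = m / (m + 1) by field_simp; ring,
    Real.div_rpow m.cast_nonneg hm.le, div_le_iff₀ (by positivity)] at bernoulli
  rw [Real.rpow_sub_one hm.ne']
  linear_combination bernoulli

theorem mul_sum_succ_rpow_le (m : ℕ) {p : ℝ} (hp0 : 0 < p) (hp1 : p ≤ 1) :
    p * ∑ l ∈ Finset.range m, ((l : ℝ) + 1) ^ (p - 1) ≤ (m : ℝ) ^ p := by
  induction m with
  | zero => simp [hp0.ne']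
  | succ m ih =>
    rw [Finset.sum_range_succ, mul_add, Nat.cast_succ]
    linarith [natCast_rpow_add_mul_succ_rpow_le m hp0 hp1]

theorem prod_one_add_mul_rpow_sq_le (m : ℕ) {K p : ℝ} (hK : 0 ≤ K) (hp0 : 0 < p) (hp1 : p ≤ 1) :
    ∏ l ∈ Finset.range m, (1 + K * (((l : ℝ) + 1) ^ (p - 1)) ^ 2) ≤
      Real.exp (2 * √K * (m : ℝ) ^ p / p) := by
  have factor_le (x : ℝ) (hx : 0 ≤ x) : 1 + K * x ^ 2 ≤ Real.exp (2 * √K * x) := by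
    have hexp := Real.add_one_le_exp (√K * x)
    calc 1 + K * x ^ 2 = 1 + (√K * x) ^ 2 := by rw [mul_pow, Real.sq_sqrt hK]
      _ ≤ (√K * x + 1) ^ 2 := by nlinarith [mul_nonneg (Real.sqrt_nonneg K) hx]
      _ ≤ Real.exp (√K * x) ^ 2 := by gcongr
      _ = Real.exp (2 * √K * x) := by rw [← Real.exp_nat_mul]; push_cast; ring_nf
  calc _ ≤ ∏ l ∈ Finset.range m, Real.exp (2 * √K * ((l : ℝ) + 1) ^ (p - 1)) :=
        Finset.prod_le_prod (fun l _ => by positivity) fun l _ => factor_le _ (by positivity)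
    _ = Real.exp (2 * √K * ∑ l ∈ Finset.range m, ((l : ℝ) + 1) ^ (p - 1)) := by
        rw [← Real.exp_sum, Finset.mul_sum]
    _ ≤ _ := by
        rw [mul_div_assoc]
        gcongr
        rw [le_div_iff₀' hp0]
        exact mul_sum_succ_rpow_le m hp0 hp1

theorem sq_le_two_mul_sum_succ_sub (L d : ℕ) :
    d ^ 2 ≤ 2 * ∑ l ∈ Finset.range (L + d), (l + 1 - L) := by
  induction d with
  | zero => simp
  | succ d ih =>
    rw [← add_assoc, Finset.sum_range_succ, show L + d + 1 - L = d + 1 by omega]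
    linarith

theorem prod_min_succ_le {L m : ℕ} (hLm : L ≤ m) :
    ∏ l ∈ Finset.range m, ((min (l + 1) L : ℕ) : ℝ) ≤
      (m.factorial : ℝ) * Real.exp (-(((m : ℝ) - L) ^ 2 / (2 * m))) := by
  rcases m.eq_zero_or_pos with rfl | hm
  · simp [Nat.le_zero.1 hLm]
  have hm0 : (0 : ℝ) < m := by exact_mod_cast hm
  have factor_le (l : ℕ) (hl : l < m) :
      ((min (l + 1) L : ℕ) : ℝ) ≤ (l + 1 : ℕ) * Real.exp (-((l + 1 - L : ℕ) / m : ℝ)) := by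
    have hmin : ((min (l + 1) L : ℕ) : ℝ) = (l + 1 : ℕ) - (l + 1 - L : ℕ) := by
      rw [eq_sub_iff_add_eq]; exact_mod_cast (by omega : min (l + 1) L + (l + 1 - L) = l + 1)
    have hlm : ((l + 1 : ℕ) : ℝ) / m ≤ 1 := by
      rw [div_le_one hm0]; exact_mod_cast hl
    calc ((min (l + 1) L : ℕ) : ℝ) ≤ (l + 1 : ℕ) - (l + 1 : ℕ) / m * (l + 1 - L : ℕ) := by
          rw [hmin]; gcongr; exact mul_le_of_le_one_left (Nat.cast_nonneg _) hlm
      _ = (l + 1 : ℕ) * (-((l + 1 - L : ℕ) / m : ℝ) + 1) := by ring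
      _ ≤ _ := by gcongr; exact Real.add_one_le_exp _
  have hsum : ((m : ℝ) - L) ^ 2 ≤ 2 * ∑ l ∈ Finset.range m, ((l + 1 - L : ℕ) : ℝ) := by
    rw [← Nat.cast_sub hLm]
    have h := sq_le_two_mul_sum_succ_sub L (m - L)
    rw [Nat.add_sub_cancel' hLm] at h
    exact_mod_cast h
  push_cast
  calc ∏ l ∈ Finset.range m, min ((l : ℝ) + 1) L
      ≤ ∏ l ∈ Finset.range m, (((l + 1 : ℕ) : ℝ) * Real.exp (-((l + 1 - L : ℕ) / m : ℝ))) :=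
        Finset.prod_le_prod (fun l _ => by positivity) fun l hl => by
          exact_mod_cast factor_le l (Finset.mem_range.1 hl)
    _ = m.factorial * Real.exp (-((∑ l ∈ Finset.range m, ((l + 1 - L : ℕ) : ℝ)) / m)) := by
        rw [Finset.prod_mul_distrib, ← Real.exp_sum, Finset.sum_neg_distrib, Finset.sum_div,
          ← Nat.cast_prod, Finset.prod_range_add_one_eq_factorial]
    _ ≤ _ := by
        gcongr ?_ * Real.exp (-?_)
        rw [div_le_div_iff₀ (by positivity) hm0]
        nlinarith

end Estimates

section BallsInBoxes

open PowerSeries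

/-- The generating series of the weights `w_{k+1} = (k!) ^ α`. -/
noncomputable def factorialSeries (α : ℝ) : ℝ⟦X⟧ :=
  PowerSeries.mk fun k => (k.factorial : ℝ) ^ α

/-- The partition function of `m` balls in `n` boxes, a box of `k` balls having weight
`(k!) ^ α`. -/
noncomputable def boxPartition (α : ℝ) (n m : ℕ) : ℝ := coeff m (factorialSeries α ^ n)

/-- The partition function of `m` balls in `n` boxes when no box may hold more than `L` balls. -/
noncomputable def boundedBoxPartition (α : ℝ) (L n m : ℕ) : ℝ :=
  coeff m ((trunc (L + 1) (factorialSeries α) : ℝ⟦X⟧) ^ n)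

theorem factorial_succ_rpow (α : ℝ) (k : ℕ) :
    ((k + 1).factorial : ℝ) ^ α = ((k : ℝ) + 1) ^ α * (k.factorial : ℝ) ^ α := by
  rw [Nat.factorial_succ, Nat.cast_mul, Nat.cast_succ,
    Real.mul_rpow (by positivity) (by positivity)]

theorem coeff_succ_factorialSeries (α : ℝ) (k : ℕ) :
    coeff (k + 1) (factorialSeries α) = ((k : ℝ) + 1) ^ α * coeff k (factorialSeries α) := by
  simp only [factorialSeries, coeff_mk, factorial_succ_rpow]

theorem factorialSeries_mem_nonnegCoeffs (α : ℝ) : factorialSeries α ∈ nonnegCoeffs ℝ :=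
  fun k => by rw [factorialSeries, coeff_mk]; positivity

theorem boxPartition_monotone (α : ℝ) (m : ℕ) : Monotone fun n => boxPartition α n m := by
  refine monotone_nat_of_le_succ fun n => ?_
  have h : coeff m (1 * factorialSeries α ^ n) ≤
      coeff m (factorialSeries α * factorialSeries α ^ n) :=
    coeff_mul_le_coeff_mul (fun k _ => by
      rw [coeff_one]
      split_ifs with hk
      · simp [hk, factorialSeries]
      · exact factorialSeries_mem_nonnegCoeffs α k)
      (pow_mem (factorialSeries_mem_nonnegCoeffs α) n)
  rwa [one_mul, ← pow_succ'] at h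

theorem factorial_rpow_le_boxPartition (α : ℝ) {n : ℕ} (hn : 0 < n) (m : ℕ) :
    (m.factorial : ℝ) ^ α ≤ boxPartition α n m := by
  simpa [boxPartition, factorialSeries] using boxPartition_monotone α m (Nat.succ_le_of_lt hn)

theorem boxPartition_pos (α : ℝ) {n : ℕ} (hn : 0 < n) (m : ℕ) : 0 < boxPartition α n m :=
  (by positivity : (0 : ℝ) < (m.factorial : ℝ) ^ α).trans_le (factorial_rpow_le_boxPartition α hn m)

theorem boundedBoxPartition_nonneg (α : ℝ) (L n m : ℕ) : 0 ≤ boundedBoxPartition α L n m :=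
  pow_mem (trunc_mem_nonnegCoeffs (factorialSeries_mem_nonnegCoeffs α) (L + 1)) n m

variable {α γ : ℝ}

theorem succ_mul_succ_rpow_le (hα : 0 ≤ α) (hγα : γ ≤ α) (hγ1 : γ ≤ 1) {k : ℕ} {M : ℝ}
    (hM : (k : ℝ) + 1 ≤ M) :
    ((k : ℝ) + 1) * ((k : ℝ) + 1) ^ α ≤ M ^ (α - γ) + k * (M ^ α + M ^ (α - γ)) := by
  have hk : (0 : ℝ) < k + 1 := by positivity
  have one_term : ((k : ℝ) + 1) ^ α ≤ M ^ (α - γ) * (k + 1) := calc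
    ((k : ℝ) + 1) ^ α = ((k : ℝ) + 1) ^ (α - γ) * ((k : ℝ) + 1) ^ γ := by
      rw [← Real.rpow_add hk, sub_add_cancel]
    _ ≤ M ^ (α - γ) * ((k : ℝ) + 1) ^ (1 : ℝ) := by
      have := sub_nonneg.2 hγα
      have hM0 : 0 ≤ M := hk.le.trans hM
      gcongr
      exact le_add_of_nonneg_left k.cast_nonneg
    _ = M ^ (α - γ) * (k + 1) := by rw [Real.rpow_one]
  have other_terms : (k : ℝ) * ((k : ℝ) + 1) ^ α ≤ k * M ^ α := by gcongr
  linarith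

theorem coeff_succ_pow_le (hα : 0 ≤ α) (hγα : γ ≤ α) (hγ1 : γ ≤ 1) {f : ℝ⟦X⟧}
    (hf : f ∈ nonnegCoeffs ℝ) {M : ℝ} (hM : 0 < M) (n : ℕ) {m : ℕ}
    (hgrowth : ∀ k ≤ m, coeff (k + 1) f ≤ ((k : ℝ) + 1) ^ α * coeff k f)
    (hzero : ∀ k ≤ m, M < k + 1 → coeff (k + 1) f = 0) :
    coeff (m + 1) (f ^ (n + 1)) ≤
      M ^ α * (1 + M ^ (-γ) * (1 + (n + 1) / (m + 1))) * coeff m (f ^ (n + 1)) := by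
  have recursion := succ_mul_coeff_succ_pow_le (m := m) (a := M ^ (α - γ))
    (c := M ^ α + M ^ (α - γ)) hf n fun k hk => by
      rcases lt_or_ge M (k + 1) with hkM | hkM
      · rw [hzero k hk hkM, mul_zero]
        have := hf k
        positivity
      · calc _ ≤ ((k : ℝ) + 1) * (((k : ℝ) + 1) ^ α * coeff k f) := by gcongr; exact hgrowth k hk
          _ = ((k : ℝ) + 1) * ((k : ℝ) + 1) ^ α * coeff k f := (mul_assoc ..).symm
          _ ≤ _ := mul_le_mul_of_nonneg_right (succ_mul_succ_rpow_le hα hγα hγ1 hkM) (hf k)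
  have hm : (0 : ℝ) < m + 1 := by positivity
  have hcoeff : 0 ≤ coeff m (f ^ (n + 1)) := pow_mem hf (n + 1) m
  rw [← mul_le_mul_iff_right₀ hm]
  calc _ ≤ ((n + 1) * M ^ (α - γ) + m * (M ^ α + M ^ (α - γ))) * coeff m (f ^ (n + 1)) := recursion
    _ ≤ ((n + 1) * M ^ (α - γ) + (m + 1) * (M ^ α + M ^ (α - γ))) * coeff m (f ^ (n + 1)) := by
        gcongr; linarith
    _ = _ := by
        rw [sub_eq_add_neg, Real.rpow_add hM]; field_simp; ring

theorem boxPartition_succ_le (hα : 0 ≤ α) (hγα : γ ≤ α) (hγ1 : γ ≤ 1) (n m : ℕ) :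
    boxPartition α (n + 1) (m + 1) ≤
      ((m : ℝ) + 1) ^ α * (1 + ((m : ℝ) + 1) ^ (-γ) * (1 + (n + 1) / (m + 1))) *
        boxPartition α (n + 1) m :=
  coeff_succ_pow_le hα hγα hγ1 (factorialSeries_mem_nonnegCoeffs α) (by positivity) n
    (fun k _ => (coeff_succ_factorialSeries α k).le)
    fun k hk hlt => absurd hlt (by have : (k : ℝ) ≤ m := Nat.cast_le.2 hk; linarith)

theorem boundedBoxPartition_succ_le (hα : 0 ≤ α) (hγα : γ ≤ α) (hγ1 : γ ≤ 1) {L : ℕ} (hL : 0 < L)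
    (n m : ℕ) :
    boundedBoxPartition α L (n + 1) (m + 1) ≤
      ((min (m + 1) L : ℕ) : ℝ) ^ α *
        (1 + ((min (m + 1) L : ℕ) : ℝ) ^ (-γ) * (1 + (n + 1) / (m + 1))) *
          boundedBoxPartition α L (n + 1) m := by
  have hF := factorialSeries_mem_nonnegCoeffs α
  refine coeff_succ_pow_le hα hγα hγ1 (trunc_mem_nonnegCoeffs hF (L + 1))
    (by exact_mod_cast (by omega : 0 < min (m + 1) L)) n (fun k _ => ?_) fun k hk hlt => ?_
  · rw [Polynomial.coeff_coe, Polynomial.coeff_coe, coeff_trunc, coeff_trunc]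
    have := hF k
    split_ifs with h h' <;> first | omega | positivity | exact (coeff_succ_factorialSeries α k).le
  · have : min (m + 1) L < k + 1 := by exact_mod_cast hlt
    rw [Polynomial.coeff_coe, coeff_trunc, if_neg (by omega)]

theorem boundedBoxPartition_le_prod (hα : 0 ≤ α) (hγα : γ ≤ α) (hγ1 : γ ≤ 1) {L : ℕ} (hL : 0 < L)
    (n m : ℕ) :
    boundedBoxPartition α L (n + 1) m ≤
      ∏ l ∈ Finset.range m, (((min (l + 1) L : ℕ) : ℝ) ^ α *
        (1 + ((min (l + 1) L : ℕ) : ℝ) ^ (-γ) * (1 + (n + 1) / (l + 1)))) := by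
  induction m with
  | zero => simp [boundedBoxPartition, factorialSeries, coeff_trunc]
  | succ m ih =>
    rw [Finset.prod_range_succ, mul_comm]
    exact (boundedBoxPartition_succ_le hα hγα hγ1 hL n m).trans
      (mul_le_mul_of_nonneg_left ih (by positivity))

theorem min_rpow_neg_mul_le (hγ0 : 0 ≤ γ) (hγ1 : γ ≤ 1) {L m n c l : ℕ} (hmL : m ≤ 2 * L)
    (hn : n + 1 ≤ m + c) (hl : l < m) :
    ((min (l + 1) L : ℕ) : ℝ) ^ (-γ) * (1 + (n + 1) / (l + 1)) ≤
      2 * (2 * m + c) * (((l : ℝ) + 1) ^ ((1 - γ) / 2 - 1)) ^ 2 := by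
  have hl0 : (0 : ℝ) < l + 1 := by positivity
  have : (0 : ℝ) < (min (l + 1) L : ℕ) := by exact_mod_cast (by omega : 0 < min (l + 1) L)
  have hM : (l : ℝ) + 1 ≤ 2 * (min (l + 1) L : ℕ) := by
    exact_mod_cast (by omega : l + 1 ≤ 2 * min (l + 1) L)
  have small_power : ((min (l + 1) L : ℕ) : ℝ) ^ (-γ) ≤ 2 * ((l : ℝ) + 1) ^ (-γ) := calc
    _ ≤ (((l : ℝ) + 1) / 2) ^ (-γ) :=
      Real.rpow_le_rpow_of_nonpos (by positivity) (by linarith) (by linarith)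
    _ = 2 ^ γ * ((l : ℝ) + 1) ^ (-γ) := by
      rw [Real.div_rpow hl0.le zero_le_two, Real.rpow_neg zero_le_two, div_inv_eq_mul, mul_comm]
    _ ≤ 2 ^ (1 : ℝ) * ((l : ℝ) + 1) ^ (-γ) := by gcongr; norm_num
    _ = 2 * ((l : ℝ) + 1) ^ (-γ) := by rw [Real.rpow_one]
  have few_boxes : 1 + ((n : ℝ) + 1) / (l + 1) ≤ (2 * m + c) / (l + 1) := by
    rw [one_add_div hl0.ne']
    refine div_le_div_of_nonneg_right ?_ hl0.le
    exact_mod_cast (by omega : l + 1 + (n + 1) ≤ 2 * m + c)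
  calc _ ≤ 2 * ((l : ℝ) + 1) ^ (-γ) * ((2 * m + c) / (l + 1)) := by gcongr
    _ = 2 * (2 * m + c) * ((l : ℝ) + 1) ^ (-γ - 1) := by rw [Real.rpow_sub_one hl0.ne']; ring
    _ = _ := by
      rw [← Real.rpow_natCast, ← Real.rpow_mul hl0.le]; congr 2; push_cast; ring

/- Capping the boxes costs a factor `min (l + 1) L / (l + 1)` to the power `α` for each of the
`m` balls, while the sharing of the balls between several boxes only gains `exp (o(m))`. -/
theorem boundedBoxPartition_le (hγ0 : 0 ≤ γ) (hγα : γ ≤ α) (hγ1 : γ < 1) {L m n c : ℕ}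
    (hL : 0 < L) (hmL : m ≤ 2 * L) (hLm : L ≤ m) (hn : n + 1 ≤ m + c) :
    boundedBoxPartition α L (n + 1) m ≤
      (m.factorial : ℝ) ^ α *
        Real.exp (2 * √(2 * (2 * m + c)) * (m : ℝ) ^ ((1 - γ) / 2) / ((1 - γ) / 2) -
          α * (((m : ℝ) - L) ^ 2 / (2 * m))) := by
  have hα : 0 ≤ α := hγ0.trans hγα
  have capping : ∏ l ∈ Finset.range m, ((min (l + 1) L : ℕ) : ℝ) ^ α ≤
      (m.factorial : ℝ) ^ α * Real.exp (-(α * (((m : ℝ) - L) ^ 2 / (2 * m)))) := by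
    rw [Real.finsetProd_rpow _ _ (fun _ _ => Nat.cast_nonneg _)]
    refine (Real.rpow_le_rpow (by positivity) (prod_min_succ_le hLm) hα).trans_eq ?_
    rw [Real.mul_rpow (by positivity) (Real.exp_pos _).le, ← Real.exp_mul, neg_mul, mul_comm α]
  have sharing : ∏ l ∈ Finset.range m,
      (1 + ((min (l + 1) L : ℕ) : ℝ) ^ (-γ) * (1 + (n + 1) / (l + 1))) ≤
        Real.exp (2 * √(2 * (2 * m + c)) * (m : ℝ) ^ ((1 - γ) / 2) / ((1 - γ) / 2)) :=
    (Finset.prod_le_prod (fun l _ => by positivity) fun l hl => by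
      gcongr 1 + ?_
      exact min_rpow_neg_mul_le hγ0 hγ1.le hmL hn (Finset.mem_range.1 hl)).trans
      (prod_one_add_mul_rpow_sq_le m (by positivity) (by linarith) (by linarith))
  refine (boundedBoxPartition_le_prod hα hγα hγ1.le hL n m).trans ?_
  rw [Finset.prod_mul_distrib, sub_eq_neg_add, Real.exp_add, ← mul_assoc]
  exact mul_le_mul capping sharing (by positivity) (by positivity)

end BallsInBoxes
section Condensation

open Topology

variable {α δ η : ℝ}

theorem tendsto_sqrt_mul_rpow_sub_mul_atBot (c : ℕ) {p κ : ℝ} (hp : p < 1 / 2) (hκ : 0 < κ) :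
    Tendsto (fun m : ℕ => 2 * √(2 * (2 * m + c)) * (m : ℝ) ^ p / p - κ * m) atTop atBot := by
  have sqrt_eq (m : ℕ) (hm : (0 : ℝ) < m) :
      2 * √(2 * (2 * m + c)) * (m : ℝ) ^ p / p - κ * m =
        m * (2 * √(2 * (2 + c * (m : ℝ)⁻¹)) / p * (m : ℝ) ^ (-(1 / 2 - p)) - κ) := by
    have hsqrt : √(2 * (2 * m + c)) = √(2 * (2 + c * (m : ℝ)⁻¹)) * (m : ℝ) ^ (1 / 2 : ℝ) := by
      rw [← Real.sqrt_eq_rpow, ← Real.sqrt_mul (by positivity)]; congr 1; field_simp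
    have hpow : (m : ℝ) ^ (1 / 2 : ℝ) * (m : ℝ) ^ p = m * (m : ℝ) ^ (-(1 / 2 - p)) := by
      rw [← Real.rpow_add hm, show 1 / 2 + p = 1 + -(1 / 2 - p) by ring, Real.rpow_add hm,
        Real.rpow_one]
    rw [hsqrt]
    linear_combination 2 * √(2 * (2 + c * (m : ℝ)⁻¹)) / p * hpow
  have hinv : Tendsto (fun m : ℕ => (m : ℝ)⁻¹) atTop (𝓝 0) := tendsto_inv_atTop_nhds_zero_nat
  have hrpow : Tendsto (fun m : ℕ => (m : ℝ) ^ (-(1 / 2 - p))) atTop (𝓝 0) :=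
    (tendsto_rpow_neg_atTop (by linarith)).comp tendsto_natCast_atTop_atTop
  have hfactor := (((((hinv.const_mul (c : ℝ)).const_add 2).const_mul 2).sqrt.const_mul 2).div_const
    p).mul hrpow |>.sub_const κ
  rw [mul_zero, zero_sub] at hfactor
  refine (tendsto_natCast_atTop_atTop.atTop_mul_neg (neg_lt_zero.2 hκ) hfactor).congr' ?_
  filter_upwards [eventually_gt_atTop 0] with m hm
  exact (sqrt_eq m (Nat.cast_pos.2 hm)).symm

theorem eventually_boundedBoxPartition_le (hα : 0 < α) (hδ : 0 < δ) (hδ2 : δ ≤ 1 / 2) (c : ℕ)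
    (hη : 0 < η) :
    ∀ᶠ m : ℕ in atTop, ∀ n, n + 1 ≤ m + c →
      boundedBoxPartition α ⌈(1 - δ) * m⌉₊ (n + 1) m ≤ η * boxPartition α (n + 1) m := by
  set γ := min α (1 / 2)
  have hγ0 : 0 < γ := lt_min hα one_half_pos
  have hγ2 : γ ≤ 1 / 2 := min_le_right ..
  have small : ∀ᶠ m : ℕ in atTop, Real.exp (2 * √(2 * (2 * m + c)) * (m : ℝ) ^ ((1 - γ) / 2) /
      ((1 - γ) / 2) - α * δ ^ 2 / 8 * m) ≤ η :=
    (Real.tendsto_exp_atBot.comp (tendsto_sqrt_mul_rpow_sub_mul_atBot c (by linarith)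
      (by positivity))).eventually_le_const hη
  filter_upwards [small, eventually_ge_atTop ⌈2 / δ⌉₊] with m hsmall hm n hn
  have hδm : 2 ≤ m * δ := (div_le_iff₀ hδ).1 (Nat.ceil_le.1 hm)
  have hm0 : (0 : ℝ) < m := pos_of_mul_pos_left (by linarith) hδ.le
  set L := ⌈(1 - δ) * m⌉₊
  have hL : (1 - δ) * m ≤ L := Nat.le_ceil _
  have hL_lt : (L : ℝ) < (1 - δ) * m + 1 := Nat.ceil_lt_add_one (by nlinarith)
  have hL0 : 0 < L := Nat.cast_pos.1 (show (0 : ℝ) < L by nlinarith)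
  have hmL : m ≤ 2 * L := by exact_mod_cast (by nlinarith : (m : ℝ) ≤ 2 * L)
  have hLm : L ≤ m := by exact_mod_cast (by nlinarith : (L : ℝ) ≤ m)
  have gap : δ ^ 2 / 8 * m ≤ ((m : ℝ) - L) ^ 2 / (2 * m) := by
    rw [le_div_iff₀ (by positivity)]
    calc δ ^ 2 / 8 * m * (2 * m) = (m * δ / 2) ^ 2 := by ring
      _ ≤ _ := by gcongr; linarith
  calc _ ≤ (m.factorial : ℝ) ^ α * Real.exp (2 * √(2 * (2 * m + c)) * (m : ℝ) ^ ((1 - γ) / 2) /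
        ((1 - γ) / 2) - α * (((m : ℝ) - L) ^ 2 / (2 * m))) :=
        boundedBoxPartition_le hγ0.le (min_le_left ..) (by linarith) hL0 hmL hLm hn
    _ ≤ (m.factorial : ℝ) ^ α * η := by
        gcongr
        refine (Real.exp_le_exp.2 ?_).trans hsmall
        linarith [mul_le_mul_of_nonneg_left gap hα.le]
    _ ≤ η * boxPartition α (n + 1) m := by
        rw [mul_comm]; gcongr; exact factorial_rpow_le_boxPartition α n.succ_pos m

end Condensation

section BoxPartitionAsymptotics

open Asymptotics PowerSeries Topology

variable {α : ℝ}

theorem succ_mul_sub_add_mul_sub_le_mul_boxPartition (α : ℝ) (L n m : ℕ) :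
    (n + 1) * (boxPartition α (n + 1) m - boxPartition α n m) +
        L * (boxPartition α (n + 1) m - boundedBoxPartition α L (n + 1) m) ≤
      m * boxPartition α (n + 1) m := by
  have h := succ_mul_sub_add_mul_sub_le_mul_coeff_pow (factorialSeries_mem_nonnegCoeffs α) L n m
  rwa [show coeff 0 (factorialSeries α) = 1 by simp [factorialSeries], one_mul] at h

theorem rpow_mul_sub_le_succ_mul_boxPartition (hα : 0 ≤ α) (L n m : ℕ) :
    ((L : ℝ) + 1) ^ (1 + α) * (boxPartition α (n + 1) m - boundedBoxPartition α L (n + 1) m) ≤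
      (m + 1) * boxPartition α (n + 1) (m + 1) := by
  have hF := factorialSeries_mem_nonnegCoeffs α
  refine mul_coeff_pow_sub_le_succ_mul_coeff_succ_pow hF (by positivity) n fun k hk => ?_
  have hLk : (L : ℝ) + 1 ≤ k + 1 := by exact_mod_cast hk.trans k.le_succ
  calc _ ≤ ((k : ℝ) + 1) ^ (1 + α) * coeff k (factorialSeries α) := by
        gcongr
        exact hF k
    _ = _ := by
        rw [coeff_succ_factorialSeries, Real.rpow_add (by positivity), Real.rpow_one, mul_assoc]

theorem boxPartition_succ_left_sub_le {η : ℝ} (hη1 : η ≤ 1) {n m : ℕ} (hm : m ≤ 2 * (n + 1))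
    (hcond : boundedBoxPartition α ⌈(1 - η) * m⌉₊ (n + 1) m ≤ η * boxPartition α (n + 1) m) :
    boxPartition α (n + 1) m - boxPartition α n m ≤ 4 * η * boxPartition α (n + 1) m := by
  have hm' : (m : ℝ) ≤ 2 * (n + 1) := by exact_mod_cast hm
  have hA := boxPartition_pos α n.succ_pos m
  have hη0 : 0 ≤ η := nonneg_of_mul_nonneg_left ((boundedBoxPartition_nonneg ..).trans hcond) hA
  have hLA : (1 - η) * m * ((1 - η) * boxPartition α (n + 1) m) ≤ ⌈(1 - η) * m⌉₊ *
      (boxPartition α (n + 1) m - boundedBoxPartition α ⌈(1 - η) * m⌉₊ (n + 1) m) := by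
    have := sub_nonneg.2 hη1
    gcongr
    · exact Nat.le_ceil _
    · linarith
  rw [← mul_le_mul_iff_right₀ (by positivity : (0 : ℝ) < n + 1)]
  calc _ ≤ (m - (1 - η) * m * (1 - η)) * boxPartition α (n + 1) m := by
        linarith [succ_mul_sub_add_mul_sub_le_mul_boxPartition α ⌈(1 - η) * m⌉₊ n m]
    _ ≤ 2 * (n + 1) * (2 * η) * boxPartition α (n + 1) m := by
        gcongr
        nlinarith [mul_nonneg hη0 (sub_nonneg.2 hm'), mul_nonneg m.cast_nonneg (sq_nonneg η)]
    _ = _ := by ring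

theorem mul_boxPartition_le_boxPartition_succ (hα : 0 ≤ α) {η : ℝ} (hη1 : η ≤ 1) {n m : ℕ}
    (hcond : boundedBoxPartition α ⌈(1 - η) * m⌉₊ (n + 1) m ≤ η * boxPartition α (n + 1) m) :
    (1 - (2 + α) * η) * (((m : ℝ) + 1) ^ α * boxPartition α (n + 1) m) ≤
      boxPartition α (n + 1) (m + 1) := by
  have hm : (0 : ℝ) < m + 1 := by positivity
  have hA := boxPartition_pos α n.succ_pos m
  have hη0 : 0 ≤ η := nonneg_of_mul_nonneg_left ((boundedBoxPartition_nonneg ..).trans hcond) hA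
  have h1η := sub_nonneg.2 hη1
  have bernoulli : 1 - (2 + α) * η ≤ (1 - η) ^ (1 + α) * (1 - η) := by
    have h := one_add_mul_self_le_rpow_one_add (s := -η) (p := 1 + α + 1) (by linarith)
      (by linarith)
    rw [← sub_eq_add_neg, Real.rpow_add_one' h1η (by linarith)] at h
    linarith
  rw [← mul_le_mul_iff_right₀ hm]
  calc _ = (1 - (2 + α) * η) * (((m : ℝ) + 1) ^ (1 + α) * boxPartition α (n + 1) m) := by
        rw [Real.rpow_add hm, Real.rpow_one]; ring
    _ ≤ (1 - η) ^ (1 + α) * (1 - η) * (((m : ℝ) + 1) ^ (1 + α) * boxPartition α (n + 1) m) := by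
        gcongr
    _ = ((1 - η) * (m + 1)) ^ (1 + α) * ((1 - η) * boxPartition α (n + 1) m) := by
        rw [Real.mul_rpow h1η hm.le]; ring
    _ ≤ ((⌈(1 - η) * m⌉₊ : ℝ) + 1) ^ (1 + α) *
        (boxPartition α (n + 1) m - boundedBoxPartition α ⌈(1 - η) * m⌉₊ (n + 1) m) := by
        gcongr ?_ ^ (1 + α) * ?_
        · linarith [Nat.le_ceil ((1 - η) * m)]
        · linarith
    _ ≤ _ := rpow_mul_sub_le_succ_mul_boxPartition hα ..

theorem boxPartition_succ_le_of_le (hα : 0 ≤ α) {γ : ℝ} (hγα : γ ≤ α) (hγ1 : γ ≤ 1) {n m c : ℕ}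
    (hn : n ≤ m + c) :
    boxPartition α (n + 1) (m + 1) ≤ (1 + ((m : ℝ) + 1) ^ (-γ) * (2 + c)) *
      (((m : ℝ) + 1) ^ α * boxPartition α (n + 1) m) := by
  have hA := boxPartition_pos α n.succ_pos m
  have few_boxes : ((n : ℝ) + 1) / (m + 1) ≤ 1 + c := by
    rw [div_le_iff₀ (by positivity)]
    exact_mod_cast (by nlinarith : n + 1 ≤ (1 + c) * (m + 1))
  calc _ ≤ ((m : ℝ) + 1) ^ α * (1 + ((m : ℝ) + 1) ^ (-γ) * (1 + (n + 1) / (m + 1))) *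
        boxPartition α (n + 1) m := boxPartition_succ_le hα hγα hγ1 n m
    _ ≤ ((m : ℝ) + 1) ^ α * (1 + ((m : ℝ) + 1) ^ (-γ) * (1 + (1 + c))) *
        boxPartition α (n + 1) m := by gcongr
    _ = _ := by ring

theorem isEquivalent_natCast_add_rpow (b : ℕ) (s : ℝ) :
    (fun m : ℕ => ((m + b : ℕ) : ℝ) ^ s) ~[atTop] fun m : ℕ => (m : ℝ) ^ s := by
  have ratio : Tendsto (fun m : ℕ => ((m + b : ℕ) : ℝ) / m) atTop (𝓝 1) := by
    have h := (tendsto_const_div_atTop_nhds_zero_nat (b : ℝ)).const_add 1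
    rw [add_zero] at h
    refine h.congr' ?_
    filter_upwards [eventually_ne_atTop 0] with m hm
    rw [Nat.cast_add, add_div, div_self (Nat.cast_ne_zero.2 hm)]
  have h := ratio.rpow_const (p := s) (Or.inl one_ne_zero)
  rw [Real.one_rpow] at h
  exact isEquivalent_of_tendsto_one
    (h.congr fun m => Real.div_rpow (by positivity) (by positivity) s)

theorem boxPartition_isEquivalent_succ_left (hα : 0 < α) (a b : ℕ) :
    (fun m => boxPartition α (m + a) (m + b)) ~[atTop]
      fun m => boxPartition α (m + a + 1) (m + b) := by
  refine isLittleO_iff.2 fun ε hε => ?_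
  set η := min (ε / 4) (1 / 2)
  have hη2 : η ≤ 1 / 2 := min_le_right ..
  have hηε : 4 * η ≤ ε := by linarith [min_le_left (ε / 4) (1 / 2)]
  have hη : 0 < η := by positivity
  filter_upwards [eventually_ge_atTop b, (tendsto_add_atTop_nat b).eventually
    (eventually_boundedBoxPartition_le hα hη hη2 (a + 1) hη)] with m hbm hcond
  have hA := boxPartition_pos α (m + a).succ_pos (m + b)
  rw [Pi.sub_apply, norm_sub_rev, Real.norm_of_nonneg hA.le,
    Real.norm_of_nonneg (sub_nonneg.2 (boxPartition_monotone α _ (Nat.le_succ _)))]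
  refine (boxPartition_succ_left_sub_le (by linarith) (by omega)
    (hcond (m + a) (by omega))).trans ?_
  gcongr

theorem boxPartition_succ_isEquivalent (hα : 0 < α) (a b : ℕ) :
    (fun m => boxPartition α (m + a + 1) (m + b + 1)) ~[atTop]
      fun m => (m : ℝ) ^ α * boxPartition α (m + a + 1) (m + b) := by
  refine IsEquivalent.trans ?_ ((isEquivalent_natCast_add_rpow (b + 1) α).mul .refl)
  refine isLittleO_iff.2 fun ε hε => ?_
  set γ := min α 1
  have hγ : 0 < γ := lt_min hα one_pos
  set η := min (ε / (2 + α)) (1 / 2)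
  have hη2 : η ≤ 1 / 2 := min_le_right ..
  have hη : 0 < η := by positivity
  have hηε : (2 + α) * η ≤ ε := (le_div_iff₀' (by positivity)).1 (min_le_left ..)
  have small : ∀ᶠ m : ℕ in atTop, ((m + b + 1 : ℕ) : ℝ) ^ (-γ) * (2 + a) ≤ ε := by
    have h := ((tendsto_rpow_neg_atTop hγ).comp (tendsto_natCast_atTop_atTop.comp
      (tendsto_add_atTop_nat (b + 1)))).mul_const (2 + (a : ℝ))
    rw [zero_mul] at h
    exact h.eventually_le_const hε
  filter_upwards [small, (tendsto_add_atTop_nat b).eventually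
    (eventually_boundedBoxPartition_le hα hη hη2 (a + 1) hη)] with m hsmall hcond
  replace hcond := hcond (m + a) (by omega)
  have lower := mul_boxPartition_le_boxPartition_succ hα.le (by linarith) hcond
  have upper := boxPartition_succ_le_of_le hα.le (γ := γ) (min_le_left ..) (min_le_right ..)
    (show m + a ≤ m + b + a by omega)
  have hA := boxPartition_pos α (m + a).succ_pos (m + b)
  rw [← Nat.cast_succ] at lower upper
  set s := ((m + b + 1 : ℕ) : ℝ) ^ α * boxPartition α (m + a + 1) (m + b)
  have hs : 0 < s := by positivity
  change ‖boxPartition α (m + a + 1) (m + b + 1) - s‖ ≤ ε * ‖s‖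
  rw [Real.norm_of_nonneg hs.le, Real.norm_eq_abs, abs_sub_le_iff]
  constructor
  · linarith [mul_le_mul_of_nonneg_right hsmall hs.le]
  · linarith [mul_le_mul_of_nonneg_right hηε hs.le]

theorem boxPartition_isEquivalent (hα : 0 < α) (a a' b k : ℕ) :
    (fun m => boxPartition α (m + a') (m + (b + k))) ~[atTop]
      fun m => ((m : ℝ) ^ α) ^ k * boxPartition α (m + a) (m + b) := by
  have shift_left (a b : ℕ) : (fun m => boxPartition α (m + a) (m + b)) ~[atTop]
      fun m => boxPartition α m (m + b) := by
    induction a with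
    | zero => exact .refl
    | succ a ih => exact (boxPartition_isEquivalent_succ_left hα a b).symm.trans ih
  induction k with
  | zero => simpa using (shift_left a' b).trans (shift_left a b).symm
  | succ k ih =>
    have h1 := boxPartition_isEquivalent_succ_left hα a' (b + k + 1)
    have h2 := (boxPartition_isEquivalent_succ_left hα a' (b + k)).symm.trans ih
    refine ((h1.trans (boxPartition_succ_isEquivalent hα a' (b + k))).trans
      (IsEquivalent.refl.mul h2)).congr_right (.of_forall fun m => ?_)
    simp only [Pi.mul_apply]
    ring

end BoxPartitionAsymptotics

section Occupation

open Asymptotics PowerSeries Topology PTree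

variable {α : ℝ}

/-- The weight `w_n = ((n - 1)!) ^ α` of a vertex of degree `n`. -/
noncomputable def factorialWeight (α : ℝ) (n : ℕ) : ℝ := ((n - 1).factorial : ℝ) ^ α

/-- The predicted number `n_i = (i!) ^ α * N ^ (1 - i * α)` of vertices of degree `i + 1`. -/
noncomputable def countScale (α : ℝ) (i N : ℕ) : ℝ :=
  (i.factorial : ℝ) ^ α * (N : ℝ) ^ (1 - (i : ℝ) * α)

theorem factorialWeight_nonneg (α : ℝ) (n : ℕ) : 0 ≤ factorialWeight α n :=
  Real.rpow_nonneg (Nat.cast_nonneg _) α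

theorem offspringSeries_factorialWeight (α : ℝ) :
    offspringSeries (factorialWeight α) = factorialSeries α := rfl

theorem succ_mul_Zfun_factorialWeight (α : ℝ) (m : ℕ) :
    (m + 1) * Zfun (factorialWeight α) (m + 1) = boxPartition α (m + 1) m := by
  have h := succ_mul_sum_choose_countOutdeg (factorialWeight α) 0 m 0 (Nat.zero_le _)
  simpa [Zfun_eq_sum, offspringSeries_factorialWeight, boxPartition] using h

theorem Zfun_factorialWeight_ne_zero (α : ℝ) (m : ℕ) : Zfun (factorialWeight α) (m + 1) ≠ 0 :=
  fun h => (boxPartition_pos α m.succ_pos m).ne' <| by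
    rw [← succ_mul_Zfun_factorialWeight, h, mul_zero]

theorem expect_choose_countOutdeg (α : ℝ) {i j m : ℕ} (hj : j ≤ m + 1) (hij : i * j ≤ m) :
    expect (factorialWeight α) (m + 1) (fun t => ((t.countOutdeg i).choose j : ℝ)) =
      ((i.factorial : ℝ) ^ α) ^ j * (m + 1).choose j *
        (boxPartition α (m + 1 - j) (m - i * j) / boxPartition α (m + 1) m) := by
  have hm : (m : ℝ) + 1 ≠ 0 := by positivity
  rw [expect, ← mul_div_mul_left _ _ hm, succ_mul_sum_choose_countOutdeg _ i m j hj,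
    succ_mul_Zfun_factorialWeight, coeff_X_pow_mul', if_pos hij, mul_div_assoc,
    factorialWeight, Nat.add_sub_cancel, offspringSeries_factorialWeight, boxPartition,
    boxPartition]

theorem countScale_pow (α : ℝ) (i j : ℕ) {N : ℕ} (hN : 0 < N) :
    countScale α i N ^ j =
      ((i.factorial : ℝ) ^ α) ^ j * ((N : ℝ) ^ j * (((N : ℝ) ^ α) ^ (i * j))⁻¹) := by
  have hN0 : (0 : ℝ) < N := Nat.cast_pos.2 hN
  rw [countScale, sub_eq_add_neg, Real.rpow_add hN0, Real.rpow_one, mul_pow, mul_pow,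
    Real.rpow_neg hN0.le, mul_comm (i : ℝ), Real.rpow_mul_natCast hN0.le, inv_pow, ← pow_mul]

theorem boxPartition_div_isEquivalent (hα : 0 < α) (a c b k : ℕ) :
    (fun m => boxPartition α (m + a) (m + b) / boxPartition α (m + c) (m + (b + k))) ~[atTop]
      fun m => ((((m + c : ℕ) : ℝ) ^ α) ^ k)⁻¹ := by
  have hden := (boxPartition_isEquivalent hα a c b k).trans
    (((isEquivalent_natCast_add_rpow c α).symm.pow k).mul .refl)
  refine (IsEquivalent.refl.div hden).congr_right ?_
  filter_upwards [eventually_gt_atTop 0] with m hm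
  have := (boxPartition_pos α (Nat.add_pos_left hm a) (m + b)).ne'
  simp only [Pi.div_apply, Pi.mul_apply, Pi.pow_apply]
  field_simp

theorem expect_choose_countOutdeg_isEquivalent (hα : 0 < α) (i j : ℕ) :
    (fun N => expect (factorialWeight α) N fun t => ((t.countOutdeg i).choose j : ℝ)) ~[atTop]
      fun N => countScale α i N ^ j / j.factorial := by
  set c := i * j + j + 1
  have hchoose : (fun m => ((m + c).choose j : ℝ)) ~[atTop]
      fun m => ((m + c : ℕ) : ℝ) ^ j / j.factorial :=
    (isEquivalent_choose j).comp_tendsto (tendsto_add_atTop_nat c)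
  have hmoment := (IsEquivalent.refl (u := fun _ => ((i.factorial : ℝ) ^ α) ^ j)).mul
    (hchoose.mul (boxPartition_div_isEquivalent hα (i * j + 1) c j (i * j)))
  rw [← map_add_atTop_eq_nat c]
  refine isLittleO_map.2 ((hmoment.congr_right (.of_forall fun m => ?_)).congr_left
    (.of_forall fun m => ?_))
  · simp only [Pi.mul_apply, countScale_pow α i j (show 0 < m + c by omega)]
    ring
  · have h := expect_choose_countOutdeg α (i := i) (j := j) (m := m + (j + i * j))
      (by omega) (by omega)
    rw [show m + (j + i * j) + 1 = m + c by omega, show m + c - j = m + (i * j + 1) by omega,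
      show m + (j + i * j) - i * j = m + j by omega, mul_assoc] at h
    exact h.symm

theorem tendsto_countScale_atTop {i : ℕ} (hiα : (i : ℝ) * α < 1) :
    Tendsto (countScale α i) atTop atTop :=
  ((tendsto_rpow_atTop (sub_pos.2 hiα)).comp tendsto_natCast_atTop_atTop).const_mul_atTop
    (by positivity)

theorem tendsto_expect_choose_div_countScale_pow (hα : 0 < α) {i : ℕ} (hiα : (i : ℝ) * α < 1)
    (j : ℕ) :
    Tendsto (fun N => expect (factorialWeight α) N (fun t => ((t.countOutdeg i).choose j : ℝ)) /
      countScale α i N ^ j) atTop (𝓝 (j.factorial : ℝ)⁻¹) := by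
  have hscale := (tendsto_countScale_atTop hiα).eventually_ne_atTop 0
  refine ((expect_choose_countOutdeg_isEquivalent hα i j).div .refl).symm.tendsto_nhds
    (tendsto_const_nhds.congr' ?_)
  filter_upwards [hscale] with N hN
  simp only [Pi.div_apply]
  field_simp

theorem tendsto_expect_sq_countOutdeg_div_sub_one (hα : 0 < α) {i : ℕ} (hiα : (i : ℝ) * α < 1) :
    Tendsto (fun N => expect (factorialWeight α) N fun t =>
      (t.countOutdeg i / countScale α i N - 1) ^ 2) atTop (𝓝 0) := by
  have moment := tendsto_expect_choose_div_countScale_pow hα hiα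
  have scale := tendsto_countScale_atTop hiα
  have h := (((moment 2).const_mul 2).add
    ((moment 1).mul (scale.inv_tendsto_atTop.sub_const 2))).add_const 1
  rw [show (2 : ℝ) * (Nat.factorial 2 : ℝ)⁻¹ + (Nat.factorial 1 : ℝ)⁻¹ * (0 - 2) + 1 = 0 by
    norm_num] at h
  refine h.congr' ?_
  filter_upwards [eventually_ge_atTop 1, scale.eventually_ne_atTop 0] with N hN hscale
  obtain ⟨m, rfl⟩ := Nat.exists_eq_add_of_le' hN
  rw [expect_sq_natCast_div_sub_one (Zfun_factorialWeight_ne_zero α m) _ hscale]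
  simp only [Pi.inv_apply, pow_one]

end Occupation

theorem stmt_14_general (α : ℝ) (h0 : 0 < α) (i : ℕ) (hiα : (i : ℝ) * α < 1) :
    ∀ ε : ℝ, 0 < ε →
      Tendsto (fun N : ℕ =>
          nu (fun n => ((n - 1).factorial : ℝ) ^ α) N
            (fun t => ε < |(t.countOutdeg i : ℝ) /
              ((i.factorial : ℝ) ^ α * (N : ℝ) ^ (1 - (i : ℝ) * α)) - 1|))
        atTop (nhds 0) := by
  intro ε hε
  have h := (tendsto_expect_sq_countOutdeg_div_sub_one h0 hiα).div_const (ε ^ 2)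
  rw [zero_div] at h
  exact squeeze_zero (fun N => PTree.nu_nonneg (factorialWeight_nonneg α) N _)
    (fun N => PTree.nu_lt_abs_le (factorialWeight_nonneg α) N _ hε) h

/-- Theorem 3 (iv), case `i < 1/α`: the number `X_{i+1,N}` of vertices of degree `i+1`
satisfies `X_{i+1,N}/n_i → 1` in probability, where `n_i = (i!)^α N^{1−iα}`. -/
theorem stmt_14 (α : ℝ) (h0 : 0 < α) (h1 : α < 1) (i : ℕ) (hi : 1 ≤ i)
    (hiα : (i : ℝ) * α < 1) :
    ∀ ε : ℝ, 0 < ε →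
      Tendsto (fun N : ℕ =>
          nu (fun n => ((n - 1).factorial : ℝ) ^ α) N
            (fun t => ε < |(t.countOutdeg i : ℝ) /
              ((i.factorial : ℝ) ^ α * (N : ℝ) ^ (1 - (i : ℝ) * α)) - 1|))
        atTop (nhds 0) :=
  stmt_14_general α h0 i hiα
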